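/- Let R be a monotone transit function on a finite nonempty set V satisfying axiom (i). Then R satisfies axiom (o'). -/

import Mathlib

/-!
Fix `z` and order the points by inclusion of the transit sets `R z a`; for a monotone transit
function, `R z a ⊆ R z b` just means `a ∈ R z b`. If `a, b, c` are pairwise incomparable, axiom (i)
gives a point below `a` and `b` but not below `c`. The three points arising in this way are again
pairwise incomparable, and they lie strictly lower, so finiteness excludes such triples.
A finite nonempty set without three pairwise incomparable elements is dominated by two of its
elements; applied to `R u v`, this yields the points `p` and `q` of axiom (o').
-/

namespace TransitPaper

variable {V : Type*}

/-- Transit function axioms (t1), (t2), (t3). -/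
def IsTransit (R : V → V → Set V) : Prop :=
  (∀ u v, u ∈ R u v) ∧ (∀ u v, R u v = R v u) ∧ (∀ u : V, R u u = {u})

/-- Monotonicity axiom (m). -/
def IsMonotone (R : V → V → Set V) : Prop :=
  ∀ u v p q, p ∈ R u v → q ∈ R u v → R p q ⊆ R u v

/-- Two sets overlap: A ∩ B, A \ B, B \ A all nonempty. -/
def Ovl (A B : Set V) : Prop :=
  (A ∩ B).Nonempty ∧ (A \ B).Nonempty ∧ (B \ A).Nonempty

/-- The system of transit sets 𝒞_R. -/
def transitSets (R : V → V → Set V) : Set (Set V) :=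
  {S | ∃ x y, S = R x y}

/-- S is an interval with respect to the order `lt`. -/
def IsIntervalWrt (lt : V → V → Prop) (S : Set V) : Prop :=
  ∀ x ∈ S, ∀ y ∈ S, ∀ w, lt x w → lt w y → w ∈ S

/-- R is pyramidal: monotone and there is a total order making all transit sets intervals. -/
def IsPyramidal (R : V → V → Set V) : Prop :=
  IsMonotone R ∧ ∃ lt : V → V → Prop, IsStrictTotalOrder V lt ∧
    ∀ u v, IsIntervalWrt lt (R u v)

def AxUC (R : V → V → Set V) : Prop :=
  ∀ x y u v : V, (R x y ∩ R u v).Nonempty →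
    ∃ p ∈ R x y ∪ R u v, ∃ q ∈ R x y ∪ R u v, R x y ∪ R u v = R p q

def AxU (R : V → V → Set V) : Prop :=
  ∀ u v z : V, z ∈ R u v → R u v = R u z ∪ R z v

def AxW (R : V → V → Set V) : Prop :=
  ∀ x y z : V, z ∈ R x y ∨ y ∈ R x z ∨ x ∈ R y z

def AxWP (R : V → V → Set V) : Prop :=
  ∀ u v x y p q : V, (R u v ∩ R x y).Nonempty → (R u v ∩ R p q).Nonempty →
    (R x y ∩ R p q).Nonempty →
    R p q ⊆ R u v ∪ R x y ∨ R u v ⊆ R p q ∪ R x y ∨ R x y ⊆ R p q ∪ R u v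

def AxI (R : V → V → Set V) : Prop :=
  ∀ x y u v p q : V, (R x y ∩ R u v).Nonempty → R x y ∩ R u v ⊆ R p q →
    (R p q \ (R x y ∪ R u v)).Nonempty → R x y ⊆ R p q ∨ R u v ⊆ R p q

def AxO' (R : V → V → Set V) : Prop :=
  ∀ u v : V, ∀ z ∈ R u v, ∃ p ∈ R u v, ∃ q ∈ R u v, R p z ∪ R z q = R u v

def AxL1 (R : V → V → Set V) : Prop :=
  ∀ x y p q u v : V, Ovl (R x y) (R p q) → Ovl (R p q) (R u v) →
    R x y ⊆ R u v ∨ R u v ⊆ R x y ∨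
      (R x y ∩ R u v ⊆ R p q ∧ R p q ⊆ R x y ∪ R u v)

def AxL2 (R : V → V → Set V) : Prop :=
  ∀ x y p q u v : V, Ovl (R x y) (R p q) → Ovl (R p q) (R u v) →
    R x y ∩ R u v = ∅ →
    ∃ s ∈ R x y \ R p q, ∃ t ∈ R u v \ R p q,
      R x y ∪ R p q ∪ R u v = R s t

def AxN3O (R : V → V → Set V) : Prop :=
  ∀ x y p q u v : V, Ovl (R x y) (R p q) → Ovl (R p q) (R u v) →
    R x y ⊆ R u v ∨ R u v ⊆ R x y ∨ R x y ∩ R u v = ∅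

def AxU3 (R : V → V → Set V) : Prop :=
  ∀ x y : V, ¬ R x y ⊆ {x, y} →
    ∃ z ∈ R x y, z ≠ x ∧ z ≠ y ∧ R x z ∪ R z y = R x y

def AxB3 (R : V → V → Set V) : Prop :=
  ∀ u v x y : V, x ∈ R u v → y ∈ R u x → x ∈ R y v

def AxB4 (R : V → V → Set V) : Prop :=
  ∀ u v x : V, x ∈ R u v → R u x ∩ R x v = {x}

def AxTB (R : V → V → Set V) : Prop :=
  ∀ W : Finset V, 3 ≤ W.card →
    ∃ x ∈ W, ∀ u ∈ W, ∀ v ∈ W, R x u ⊆ R x v ∨ R x v ⊆ R x u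

def AxHC (R : V → V → Set V) : Prop :=
  ∀ W : Finset V, 3 ≤ W.card →
    ∃ x ∈ W, ∃ y ∈ W, x ≠ y ∧
      ∀ u ∈ W, ∀ v ∈ W,
        (R x u ⊆ R x v ∨ R x v ⊆ R x u) ∧ (R y u ⊆ R y v ∨ R y v ⊆ R y u)

def AxTB' (R : V → V → Set V) : Prop :=
  ∀ n : ℕ, 3 ≤ n → ∀ v : ZMod n → V,
    (∀ k : ZMod n, v (k - 1) ∉ R (v k) (v (k + 1)) ∧
      v (k + 1) ∉ R (v (k - 1)) (v k)) →
    ∃ j i : ZMod n, i ≠ j ∧ i ≠ j - 1 ∧ v j ∈ R (v i) (v (i + 1))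

def AxP2 (R : V → V → Set V) : Prop :=
  ∀ x y u v p q s t : V,
    Ovl (R x y) (R s t) → Ovl (R u v) (R s t) → Ovl (R p q) (R s t) →
    R x y ⊆ R u v ∪ R p q ∪ R s t ∨ R u v ⊆ R x y ∪ R p q ∪ R s t ∨
      R p q ⊆ R x y ∪ R u v ∪ R s t

def AxP3 (R : V → V → Set V) : Prop :=
  ∀ x y u v p q s t : V,
    Ovl (R x y) (R u v) → Ovl (R x y) (R p q) → Ovl (R x y) (R s t) →
    R p q ⊆ R u v → R s t ⊆ R u v → (R p q ∩ R s t).Nonempty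

def AxP4 (R : V → V → Set V) : Prop :=
  ∀ n : ℕ, 3 ≤ n → ∀ (u v y : V) (x : ℕ → V),
    (∀ i j : ℕ, 1 ≤ i → i ≤ n → 1 ≤ j → j + 1 ≤ n → j ≠ i - 1 → j ≠ i →
      x i ∉ R (x j) (x (j + 1))) →
    (R u v ∩ R (x 1) (x 2)).Nonempty →
    (R u v ∩ R (x (n - 1)) (x n)).Nonempty →
    (∀ i : ℕ, 1 ≤ i → i + 1 ≤ n → y ∈ R u v \ R (x i) (x (i + 1))) →
    R (x 1) (x 2) ⊆ R u v ∨ R (x (n - 1)) (x n) ⊆ R u v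

/-- A weak β-cycle in a set system 𝒞. -/
def HasWeakBetaCycle (𝒞 : Set (Set V)) : Prop :=
  ∃ n : ℕ, 3 ≤ n ∧ ∃ (C : ZMod n → Set V) (x : ZMod n → V),
    (∀ i, C i ∈ 𝒞) ∧ (∀ i, x i ∈ C i ∧ x i ∈ C (i + 1)) ∧
    (∀ i k : ZMod n, k ≠ i → k ≠ i + 1 → x i ∉ C k)

def TotallyBalanced (𝒞 : Set (Set V)) : Prop := ¬ HasWeakBetaCycle 𝒞

/-- A pure cycle: a weak β-cycle with nonconsecutive sets disjoint. -/
def HasPureCycle (𝒞 : Set (Set V)) : Prop :=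
  ∃ n : ℕ, 3 ≤ n ∧ ∃ (C : ZMod n → Set V) (x : ZMod n → V),
    (∀ i, C i ∈ 𝒞) ∧ (∀ i, x i ∈ C i ∧ x i ∈ C (i + 1)) ∧
    (∀ i k : ZMod n, k ≠ i → k ≠ i + 1 → x i ∉ C k) ∧
    (∀ i j : ZMod n, j ≠ i - 1 → j ≠ i → j ≠ i + 1 → C i ∩ C j = ∅)

def HasGammaTriangle (𝒞 : Set (Set V)) : Prop :=
  ∃ C₁ C₂ C₃ : Set V, C₁ ∈ 𝒞 ∧ C₂ ∈ 𝒞 ∧ C₃ ∈ 𝒞 ∧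
    (C₁ ∩ C₂).Nonempty ∧ (C₁ ∩ C₃).Nonempty ∧ (C₂ ∩ C₃).Nonempty ∧
    ∃ u ∈ C₃, ∃ w ∈ C₃, u ∈ C₁ \ C₂ ∧ w ∈ C₂ \ C₁

def GammaAcyclic (𝒞 : Set (Set V)) : Prop :=
  ¬ HasPureCycle 𝒞 ∧ ¬ HasGammaTriangle 𝒞

def IsHierarchy (𝒞 : Set (Set V)) : Prop :=
  Set.univ ∈ 𝒞 ∧ (∀ x : V, {x} ∈ 𝒞) ∧
    ∀ A ∈ 𝒞, ∀ B ∈ 𝒞, A ∩ B = A ∨ A ∩ B = B ∨ A ∩ B = ∅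

def WeakHierarchy (𝒞 : Set (Set V)) : Prop :=
  ∀ A ∈ 𝒞, ∀ B ∈ 𝒞, ∀ C ∈ 𝒞,
    A ∩ B ∩ C = A ∩ B ∨ A ∩ B ∩ C = A ∩ C ∨ A ∩ B ∩ C = B ∩ C

def AxWPSet (𝒞 : Set (Set V)) : Prop :=
  ∀ A ∈ 𝒞, ∀ B ∈ 𝒞, ∀ C ∈ 𝒞,
    (A ∩ B).Nonempty → (A ∩ C).Nonempty → (B ∩ C).Nonempty →
    A ⊆ B ∪ C ∨ B ⊆ A ∪ C ∨ C ⊆ A ∪ B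

def AxISet (𝒞 : Set (Set V)) : Prop :=
  ∀ A ∈ 𝒞, ∀ B ∈ 𝒞, ∀ C ∈ 𝒞,
    (A ∩ B).Nonempty → A ∩ B ⊆ C → (C \ (A ∪ B)).Nonempty →
    A ⊆ C ∨ B ⊆ C

def AxL1Set (𝒞 : Set (Set V)) : Prop :=
  ∀ A ∈ 𝒞, ∀ B ∈ 𝒞, ∀ C ∈ 𝒞, Ovl A B → Ovl B C →
    A ⊆ C ∨ C ⊆ A ∨ (A ∩ C ⊆ B ∧ B ⊆ A ∪ C)

def AxN3OSet (𝒞 : Set (Set V)) : Prop :=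
  ∀ A ∈ 𝒞, ∀ B ∈ 𝒞, ∀ C ∈ 𝒞, Ovl A B → Ovl B C → ¬ Ovl A C

def AxL2'Set (𝒞 : Set (Set V)) : Prop :=
  ∀ A ∈ 𝒞, ∀ B ∈ 𝒞, ∀ C ∈ 𝒞, Ovl A B → Ovl B C → A ∩ C = ∅ →
    A ∪ B ∪ C ∈ 𝒞

def AxL2''Set (𝒞 : Set (Set V)) : Prop :=
  ∀ A ∈ 𝒞, ∀ B ∈ 𝒞, ∀ C ∈ 𝒞, ∀ D ∈ 𝒞, Ovl A B → Ovl B C → A ∩ C = ∅ →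
    (A ∪ C) \ B ⊆ D → A ∪ B ∪ C ⊆ D

section IncompTriple

variable {α : Type*} [Preorder α] {s : Set α} {a b c : α}

/-- Three pairwise incomparable elements. A preorder has width at most two when it contains no such
triple. -/
structure IncompTriple (a b c : α) : Prop where
  fst_snd : IncompRel (· ≤ ·) a b
  fst_trd : IncompRel (· ≤ ·) a c
  snd_trd : IncompRel (· ≤ ·) b c

theorem IncompTriple.rotate (h : IncompTriple a b c) : IncompTriple b c a :=
  ⟨h.snd_trd, h.fst_snd.symm, h.fst_trd.symm⟩

theorem not_incompTriple_of_isWF (hs : s.IsWF)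
    (hsep : ∀ a ∈ s, ∀ b ∈ s, ∀ c ∈ s, IncompTriple a b c → ∃ x ∈ s, x ≤ a ∧ x ≤ b ∧ ¬ x ≤ c)
    (ha : a ∈ s) (hb : b ∈ s) (hc : c ∈ s) : ¬ IncompTriple a b c := by
  refine hs.induction (P := fun a => ∀ b ∈ s, ∀ c ∈ s, ¬ IncompTriple a b c) ha ?_ b hb c hc
  intro a ha ih b hb c hc h
  obtain ⟨x, hx, hxa, hxb, hxc⟩ := hsep a ha b hb c hc h
  obtain ⟨y, hy, hyb, hyc, hya⟩ := hsep b hb c hc a ha h.rotate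
  obtain ⟨w, hw, hwc, hwa, hwb⟩ := hsep c hc a ha b hb h.rotate.rotate
  have hxa_lt : x < a := hxa.lt_of_not_ge fun hax => h.fst_snd.not_le (hax.trans hxb)
  have hxyw : IncompTriple x y w :=
    { fst_snd := ⟨fun hxy => hxc (hxy.trans hyc), fun hyx => hya (hyx.trans hxa)⟩
      fst_trd := ⟨fun hxw => hxc (hxw.trans hwc), fun hwx => hwb (hwx.trans hxb)⟩
      snd_trd := ⟨fun hyw => hya (hyw.trans hwa), fun hwy => hwb (hwy.trans hyb)⟩ }
  exact ih x hx hxa_lt y hy w hw hxyw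

theorem exists_forall_le_or_le_of_not_incompTriple (hs : s.Finite) (hne : s.Nonempty)
    (htriple : ∀ a ∈ s, ∀ b ∈ s, ∀ c ∈ s, ¬ IncompTriple a b c) :
    ∃ p ∈ s, ∃ q ∈ s, ∀ r ∈ s, r ≤ p ∨ r ≤ q := by
  obtain ⟨p, hp⟩ := hs.exists_maximal hne
  by_cases hgreatest : ∀ r ∈ s, r ≤ p
  · exact ⟨p, hp.prop, p, hp.prop, fun r hr => .inl (hgreatest r hr)⟩
  have hne' : {r ∈ s | ¬ r ≤ p}.Nonempty := by push Not at hgreatest; exact hgreatest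
  obtain ⟨q, hq⟩ := (hs.sep fun r => ¬ r ≤ p).exists_maximal hne'
  refine ⟨p, hp.prop, q, hq.prop.1, fun r hr => ?_⟩
  by_contra! ⟨hrp, hrq⟩
  have hincomp_p : ∀ t ∈ s, ¬ t ≤ p → IncompRel (· ≤ ·) p t :=
    fun t ht htp => ⟨fun hpt => htp (hp.le_of_ge ht hpt), htp⟩
  exact htriple p hp.prop q hq.prop.1 r hr
    { fst_snd := hincomp_p q hq.prop.1 hq.prop.2
      fst_trd := hincomp_p r hr hrp
      snd_trd := ⟨fun hqr => hrq (hq.le_of_ge ⟨hr, hrp⟩ hqr), hrq⟩ }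

end IncompTriple

theorem isWF_of_forall_finite {S : Set (Set V)} (hS : ∀ A ∈ S, A.Finite) : S.IsWF :=
  Subrelation.wf (fun {_ B} hAB => Set.ncard_lt_ncard hAB (hS B B.2))
    (measure fun A : S => (A : Set V).ncard).wf

section TransitFunction

variable {R : V → V → Set V} {z : V}

theorem IsTransit.right_mem (htf : IsTransit R) (u v : V) : v ∈ R u v :=
  htf.2.1 v u ▸ htf.1 v u

theorem IsMonotone.subset_iff_mem (hm : IsMonotone R) (htf : IsTransit R) {a b : V} :
    R z a ⊆ R z b ↔ a ∈ R z b :=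
  ⟨fun h => h (htf.right_mem z a), hm z b z a (htf.1 z b)⟩

theorem AxI.not_inter_subset_of_incompTriple (hi : AxI R) (hm : IsMonotone R) (htf : IsTransit R)
    {a b c : V} (h : IncompTriple (R z a) (R z b) (R z c)) : ¬ R z a ∩ R z b ⊆ R z c := by
  intro hsub
  have hc : c ∉ R z a ∪ R z b := by
    rintro (hca | hcb)
    · exact h.fst_trd.not_ge ((hm.subset_iff_mem htf).2 hca)
    · exact h.snd_trd.not_ge ((hm.subset_iff_mem htf).2 hcb)
  exact (hi z a z b z c ⟨z, htf.1 z a, htf.1 z b⟩ hsub ⟨c, htf.right_mem z c, hc⟩).elim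
    h.fst_trd.not_le h.snd_trd.not_le

theorem AxI.not_incompTriple (hi : AxI R) (hm : IsMonotone R) (htf : IsTransit R)
    (hfin : ∀ a, (R z a).Finite) (a b c : V) : ¬ IncompTriple (R z a) (R z b) (R z c) := by
  have hwf : (Set.range (R z)).IsWF := isWF_of_forall_finite (Set.forall_mem_range.2 hfin)
  refine not_incompTriple_of_isWF hwf ?_ ⟨a, rfl⟩ ⟨b, rfl⟩ ⟨c, rfl⟩
  rintro _ ⟨a, rfl⟩ _ ⟨b, rfl⟩ _ ⟨c, rfl⟩ h
  obtain ⟨x, ⟨hxa, hxb⟩, hxc⟩ :=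
    Set.not_subset.1 (hi.not_inter_subset_of_incompTriple hm htf h)
  exact ⟨R z x, ⟨x, rfl⟩, (hm.subset_iff_mem htf).2 hxa, (hm.subset_iff_mem htf).2 hxb,
    mt (hm.subset_iff_mem htf).1 hxc⟩

theorem stmt_8_general (htf : IsTransit R) (hm : IsMonotone R) (hi : AxI R)
    (hfin : ∀ u v, (R u v).Finite) : AxO' R := by
  intro u v z hz
  obtain ⟨p, hp, q, hq, hcover⟩ :
      ∃ p ∈ R u v, ∃ q ∈ R u v, ∀ r ∈ R u v, R z r ⊆ R z p ∨ R z r ⊆ R z q := by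
    simpa only [Set.exists_mem_image, Set.forall_mem_image] using
      exists_forall_le_or_le_of_not_incompTriple ((hfin u v).image (R z)) ⟨R z z, z, hz, rfl⟩
        (by simpa only [Set.forall_mem_image] using
          fun a _ b _ c _ => hi.not_incompTriple hm htf (hfin z) a b c)
  refine ⟨p, hp, q, hq,
    (Set.union_subset (hm u v p z hp hz) (hm u v z q hz hq)).antisymm fun r hr => ?_⟩
  rw [htf.2.1 p z]
  exact (hcover r hr).imp (hm.subset_iff_mem htf).1 (hm.subset_iff_mem htf).1

end TransitFunction

/-- A monotone transit function satisfying (i) satisfies (o'). -/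
theorem stmt_8 {V : Type*} [Fintype V] [Nonempty V] (R : V → V → Set V)
    (htf : IsTransit R) (hm : IsMonotone R) (hi : AxI R) :
    AxO' R :=
  stmt_8_general htf hm hi fun u v => (R u v).toFinite

end TransitPaper
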